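/- Let G be an abelian group. Suppose that for each color i (1 ≤ i ≤ q), A_i = F_i + M_i, where F_i ⊆ G is a finite nonempty set with |F_i| = k_i and M_i ⊆ G is a submonoid. Then for every r ∈ ℕ and every h ∈ ℕ₀^q there exists a set X_h ⊆ G such that (rh)·𝒜 ⊆ X_h + h·𝒜 and |X_h| ≤ ∏_{i=1}^q C((r+1)(k_i−1), k_i−1). In particular, 𝒜 is a chromatic (r,ℓ)-approximate group with ℓ = ∏_{i=1}^q C((r+1)(k_i−1), k_i−1). -/

import Mathlib

open Pointwise BigOperators

/-- The `h`-fold iterated sumset `hA = A + ⋯ + A` (`h` times), with `0A = {0}`. -/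
def hfold {G : Type*} [AddCommMonoid G] : ℕ → Set G → Set G
  | 0, _ => {0}
  | n + 1, A => A + hfold n A

/-- The chromatic sumset `h·𝒜 = h₁A₁ + ⋯ + h_qA_q`. -/
def chromSum {G : Type*} [AddCommMonoid G] {q : ℕ} (h : Fin q → ℕ) (A : Fin q → Set G) :
    Set G :=
  ∑ i, hfold (h i) (A i)

open Classical in
theorem hfold_iff {G : Type*} [AddCommGroup G] (A : Set G) (n : ℕ) (g : G) :
    g ∈ hfold n A ↔ ∃ t : Multiset G, t.card = n ∧ (∀ x ∈ t, x ∈ A) ∧ t.sum = g := by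
  induction n generalizing g with
  | zero =>
    simp only [hfold, Set.mem_singleton_iff]
    constructor
    · rintro rfl
      exact ⟨0, by simp⟩
    · rintro ⟨t, h1, -, h2⟩
      rw [Multiset.card_eq_zero] at h1
      subst h1
      simpa using h2.symm
  | succ n ih =>
    simp only [hfold, Set.mem_add]
    constructor
    · rintro ⟨a, ha, b, hb, rfl⟩
      obtain ⟨t, h1, h2, h3⟩ := (ih b).1 hb
      refine ⟨a ::ₘ t, by simp [h1], ?_, by simp [h3]⟩
      intro x hx
      rcases Multiset.mem_cons.1 hx with rfl | hx
      · exact ha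
      · exact h2 x hx
    · rintro ⟨t, h1, h2, h3⟩
      obtain ⟨a, u, rfl⟩ : ∃ a u, t = a ::ₘ u := by
        obtain ⟨a, ha⟩ := Multiset.card_pos_iff_exists_mem.1 (by omega : 0 < t.card)
        exact ⟨a, t.erase a, (Multiset.cons_erase ha).symm⟩
      refine ⟨a, h2 a (by simp), u.sum, (ih _).2 ⟨u, by simpa using h1, ?_, rfl⟩, by simpa using h3⟩
      intro x hx
      exact h2 x (by simp [hx])

theorem hfold_add {G : Type*} [AddCommGroup G] (A B : Set G) (n : ℕ) :
    hfold n (A + B) = hfold n A + hfold n B := by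
  induction n with
  | zero => simp [hfold]
  | succ n ih => simp only [hfold, ih]; exact add_add_add_comm _ _ _ _

theorem hfold_card {G : Type*} [AddCommGroup G] (F : Finset G) (hF : F.Nonempty) (n : ℕ) :
    ∃ T : Finset G, T.card ≤ (n + (F.card - 1)).choose (F.card - 1) ∧
      hfold n (F : Set G) ⊆ T := by
  classical
  refine ⟨Finset.univ.image (fun t : Sym F n => ((t : Multiset F).map Subtype.val).sum), ?_, ?_⟩
  · refine Finset.card_image_le.trans ?_
    have : 0 < F.card := hF.card_pos
    rw [Finset.card_univ, Sym.card_sym_eq_choose, Fintype.card_coe]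
    have e : F.card + n - 1 = n + (F.card - 1) := by omega
    rw [e, Nat.choose_symm_add]
  · intro g hg
    obtain ⟨t, h1, h2, rfl⟩ := (hfold_iff _ _ _).1 hg
    lift t to Multiset F using fun x hx => by simpa using h2 x hx
    simp only [Finset.coe_image, Finset.coe_univ, Set.image_univ, Set.mem_range]
    exact ⟨⟨t, by simpa using h1⟩, rfl⟩

open Classical in
theorem hfold_coord {G : Type*} [AddCommGroup G] (F : Finset G) (f : G) (hf : f ∈ F) (n : ℕ)
    (g : G) : g ∈ hfold n (F : Set G) ↔
      ∃ c : G → ℕ, ∑ e ∈ F.erase f, c e ≤ n ∧ g = n • f + ∑ e ∈ F.erase f, c e • (e - f) := by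
  rw [hfold_iff]
  constructor
  · rintro ⟨t, h1, h2, h3⟩
    have hs : t.toFinset ⊆ F := fun x hx => by simpa using h2 x (by simpa using hx)
    have e1 : ∑ e ∈ F, t.count e = n := by
      rw [← h1]; exact Multiset.sum_count_eq_card (fun x hx => by simpa using h2 x hx)
    have e2 : ∑ e ∈ F, t.count e • e = g := by
      rw [← h3, Finset.sum_multiset_count_of_subset _ _ hs]
    refine ⟨fun e => t.count e, ?_, ?_⟩
    · rw [← e1]; exact Finset.sum_le_sum_of_subset (Finset.erase_subset _ _)
    · have : ∑ e ∈ F.erase f, t.count e • (e - f) = ∑ e ∈ F, t.count e • (e - f) :=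
        Finset.sum_erase _ (by simp)
      rw [this]
      simp only [smul_sub, Finset.sum_sub_distrib, ← Finset.sum_smul, e1, e2]
      abel
  · rintro ⟨c, h1, rfl⟩
    refine ⟨∑ e ∈ F.erase f, Multiset.replicate (c e) e +
      Multiset.replicate (n - ∑ e ∈ F.erase f, c e) f, ?_, ?_, ?_⟩
    · simp; omega
    · intro x hx
      rcases Multiset.mem_add.1 hx with hx | hx
      · obtain ⟨e, he, hx⟩ := Multiset.mem_sum.1 hx
        rw [Multiset.eq_of_mem_replicate hx]
        exact Finset.mem_of_mem_erase he
      · rw [Multiset.eq_of_mem_replicate hx]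
        exact hf
    · obtain ⟨m, rfl⟩ := Nat.exists_eq_add_of_le h1
      simp only [Multiset.sum_add, Multiset.sum_sum, Multiset.sum_replicate, smul_sub,
        Finset.sum_sub_distrib, ← Finset.sum_smul, add_tsub_cancel_left, add_smul]
      abel

theorem cover_one {G : Type*} [AddCommGroup G] (F : Finset G) (hF : F.Nonempty) (r h : ℕ)
    (hr : 0 < r) :
    ∃ X : Finset G, X.card ≤ ((r + 1) * (F.card - 1)).choose (F.card - 1) ∧
      hfold (r * h) (F : Set G) ⊆ X + hfold h (F : Set G) := by
  classical
  obtain ⟨f, hf⟩ := id hF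
  set d := F.card - 1 with hd
  have hE : (F.erase f).card = d := Finset.card_erase_of_mem hf
  obtain ⟨T, hT, hTs⟩ := hfold_card F hF (r * d)
  set s := h / d + 1 with hs
  refine ⟨T.image (fun g => (r * h) • f - h • f + s • (g - (r * d) • f)), ?_, ?_⟩
  · refine Finset.card_image_le.trans (hT.trans_eq ?_)
    rw [← hd, add_mul, one_mul]
  · intro g hg
    obtain ⟨c, hc, rfl⟩ := (hfold_coord F f hf _ _).1 hg
    have hdiv : ∑ e ∈ F.erase f, c e / s ≤ r * d := by
      rcases Nat.eq_zero_or_pos d with h0 | h0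
      · rw [h0, Finset.card_eq_zero] at hE
        simp [hE]
      · have h1 : s * ∑ e ∈ F.erase f, c e / s ≤ r * h := by
          rw [Finset.mul_sum]
          exact (Finset.sum_le_sum fun e _ => Nat.mul_div_le _ _).trans hc
        have h2 : h ≤ s * d := by
          have := Nat.lt_mul_div_succ h h0
          rw [mul_comm]; exact this.le
        have h3 : s * ∑ e ∈ F.erase f, c e / s ≤ s * (r * d) := by
          calc _ ≤ r * h := h1
            _ ≤ r * (s * d) := Nat.mul_le_mul_left _ h2
            _ = _ := by ring
        exact Nat.le_of_mul_le_mul_left h3 (Nat.succ_pos _)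
    have hmod : ∑ e ∈ F.erase f, c e % s ≤ h := by
      calc _ ≤ ∑ e ∈ F.erase f, h / d := Finset.sum_le_sum fun e _ => by
            have := Nat.mod_lt (c e) (Nat.succ_pos _ : s > 0)
            exact Nat.lt_succ_iff.1 this
        _ = d * (h / d) := by simp [hE]
        _ ≤ h := Nat.mul_div_le _ _
    refine Set.mem_add.2 ⟨(r * h) • f - h • f +
        s • (((r * d) • f + ∑ e ∈ F.erase f, (c e / s) • (e - f)) - (r * d) • f), ?_, _,
      (hfold_coord F f hf _ _).2 ⟨_, hmod, rfl⟩, ?_⟩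
    · rw [Finset.mem_coe]
      exact Finset.mem_image_of_mem
        (fun g => (r * h) • f - h • f + s • (g - (r * d) • f))
        (hTs ((hfold_coord F f hf _ _).2 ⟨_, hdiv, rfl⟩))
    · have : ∑ e ∈ F.erase f, c e • (e - f) = s • ∑ e ∈ F.erase f, (c e / s) • (e - f) +
          ∑ e ∈ F.erase f, (c e % s) • (e - f) := by
        rw [Finset.smul_sum, ← Finset.sum_add_distrib]
        refine Finset.sum_congr rfl fun e _ => ?_
        rw [← mul_smul, ← add_smul, Nat.div_add_mod]
      rw [this, add_sub_cancel_left]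
      abel

theorem hfold_sub_monoid {G : Type*} [AddCommGroup G] (M : Set G) (h0 : (0 : G) ∈ M)
    (hM : M + M ⊆ M) (n : ℕ) : hfold n M ⊆ M := by
  induction n with
  | zero => simpa [hfold] using h0
  | succ n ih => exact (Set.add_subset_add_left ih).trans hM

theorem zero_mem_hfold {G : Type*} [AddCommGroup G] (M : Set G) (h0 : (0 : G) ∈ M) (n : ℕ) :
    (0 : G) ∈ hfold n M := by
  induction n with
  | zero => simp [hfold]
  | succ n ih => exact Set.mem_add.2 ⟨0, h0, 0, ih, by simp⟩

theorem cover_color {G : Type*} [AddCommGroup G] (F : Finset G) (hF : F.Nonempty) (M : Set G)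
    (h0 : (0 : G) ∈ M) (hM : M + M ⊆ M) (r h : ℕ) (hr : 0 < r) :
    ∃ X : Finset G, X.card ≤ ((r + 1) * (F.card - 1)).choose (F.card - 1) ∧
      hfold (r * h) ((F : Set G) + M) ⊆ X + hfold h ((F : Set G) + M) := by
  obtain ⟨X, hX, hs⟩ := cover_one F hF r h hr
  refine ⟨X, hX, ?_⟩
  rw [hfold_add, hfold_add, ← add_assoc]
  refine Set.add_subset_add hs ?_
  rcases h with _ | h
  · simp [hfold]
  · refine (hfold_sub_monoid M h0 hM _).trans fun x hx => ?_
    exact Set.mem_add.2 ⟨x, hx, 0, zero_mem_hfold M h0 h, by simp⟩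

/-- Finite-set-plus-submonoid color classes: if `Aᵢ = Fᵢ + Mᵢ` with `Fᵢ` finite nonempty
of size `kᵢ` and `Mᵢ` a submonoid, then for every `r` and every `h` there is `X_h` with
`(rh)·𝒜 ⊆ X_h + h·𝒜` and `|X_h| ≤ ∏ᵢ C((r+1)(kᵢ−1), kᵢ−1)`; in particular `𝒜` is a
chromatic `(r, ∏ᵢ C((r+1)(kᵢ−1), kᵢ−1))`-approximate group. -/
theorem stmt10 {G : Type*} [AddCommGroup G] {q : ℕ} (A : Fin q → Set G)
    (F : Fin q → Finset G) (M : Fin q → Set G) (k : Fin q → ℕ)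
    (hFne : ∀ i, (F i).Nonempty) (hFcard : ∀ i, (F i).card = k i)
    (hM0 : ∀ i, (0 : G) ∈ M i) (hMadd : ∀ i, M i + M i ⊆ M i)
    (hA : ∀ i, A i = ↑(F i) + M i) (r : ℕ) (hr : 0 < r) :
    ∀ h : Fin q → ℕ,
      ∃ X : Finset G, X.card ≤ ∏ i, ((r + 1) * (k i - 1)).choose (k i - 1) ∧
        chromSum (fun i => r * h i) A ⊆ ↑X + chromSum h A := by
  intro h
  classical
  choose X hX hs using fun i => cover_color (F i) (hFne i) (M i) (hM0 i) (hMadd i) r (h i) hr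
  refine ⟨∑ i, X i, ?_, ?_⟩
  · have key : ∀ S : Finset (Fin q), (∑ i ∈ S, X i).card ≤ ∏ i ∈ S, (X i).card := by
      intro S
      induction S using Finset.induction_on with
      | empty => simp
      | insert a S ha ih =>
        rw [Finset.sum_insert ha, Finset.prod_insert ha]
        exact Finset.card_add_le.trans (Nat.mul_le_mul_left _ ih)
    refine (key _).trans (Finset.prod_le_prod' fun i _ => ?_)
    rw [← hFcard i]
    exact hX i
  · unfold chromSum
    rw [Finset.coe_sum, ← Finset.sum_add_distrib]
    refine Set.finsetSum_subset_finsetSum _ _ _ fun i _ => ?_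
    rw [hA i]
    exact hs i
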